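/- Let d be even and let P ⊆ ℝ^d be a d-dimensional simplicial reflexive polytope with exactly 3d vertices. Then P splits into d/2 copies of V2. -/

import Mathlib

noncomputable section

/-- The standard inner product on `ℝ^d`. -/
def dotp {d : ℕ} (x y : Fin d → ℝ) : ℝ := ∑ i, x i * y i

/-- `x` is a point of the lattice `ℤ^d`. -/
def IsLP {d : ℕ} (x : Fin d → ℝ) : Prop := ∀ i, ∃ n : ℤ, x i = (n : ℝ)

/-- A lattice polytope: convex hull of finitely many lattice points. -/
def IsLatticePolytope {d : ℕ} (P : Set (Fin d → ℝ)) : Prop :=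
  ∃ V : Finset (Fin d → ℝ), (∀ v ∈ V, IsLP v) ∧ P = convexHull ℝ (V : Set (Fin d → ℝ))

/-- The dual polytope `P* = {x | ⟨x,y⟩ ≤ 1 ∀ y ∈ P}`. -/
def dualPolytope {d : ℕ} (P : Set (Fin d → ℝ)) : Set (Fin d → ℝ) :=
  {x | ∀ y ∈ P, dotp x y ≤ 1}

/-- `P` is a reflexive polytope: a (`d`-dimensional) lattice polytope with `0` in its
interior whose dual is again a lattice polytope. -/
def IsReflexive {d : ℕ} (P : Set (Fin d → ℝ)) : Prop :=
  IsLatticePolytope P ∧ (0 : Fin d → ℝ) ∈ interior P ∧ IsLatticePolytope (dualPolytope P)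

/-- `F` is a facet of `P` with (uniquely determined) outer normal `u`, normalized by
`⟨u, F⟩ = 1` (possible since `0` is in the interior of `P`). -/
def IsFacetNormal {d : ℕ} (P F : Set (Fin d → ℝ)) (u : Fin d → ℝ) : Prop :=
  F.Nonempty ∧ (∀ y ∈ P, dotp u y ≤ 1) ∧ F = {y ∈ P | dotp u y = 1} ∧
    Module.finrank ℝ (vectorSpan ℝ F) = d - 1

/-- `F` is a facet of `P`. -/
def IsFacet {d : ℕ} (P F : Set (Fin d → ℝ)) : Prop := ∃ u, IsFacetNormal P F u

/-- `P` is simplicial: every facet has exactly `d` vertices. -/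
def IsSimplicial {d : ℕ} (P : Set (Fin d → ℝ)) : Prop :=
  ∀ F, IsFacet P F → (Set.extremePoints ℝ F).ncard = d

/-- Vertices of the hexagon `V₂`. -/
def V2v : Set (Fin 2 → ℤ) := {![1,0], ![0,1], ![1,1], ![-1,0], ![0,-1], ![-1,-1]}

/-- Vertices of the pentagon `Ṽ₂`. -/
def tV2v : Set (Fin 2 → ℤ) := {![1,0], ![0,1], ![1,1], ![-1,0], ![0,-1]}

/-- Vertices of the pentagon `E₁`. -/
def E1v : Set (Fin 2 → ℤ) := {![1,0], ![-1,2], ![-1,1], ![0,-1], ![1,-1]}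

/-- Vertices of the pentagon `E₂`. -/
def E2v : Set (Fin 2 → ℤ) := {![1,0], ![0,1], ![-1,1], ![-1,-1], ![1,-1]}

/-- Vertices of the 3-polytope `Q₃`. -/
def Q3v : Set (Fin 3 → ℤ) :=
  {![1,0,0], ![-1,0,0], ![0,1,0], ![0,-1,0], ![1,1,0], ![-1,-1,0], ![0,0,1], ![0,0,-1]}

/-- Vertices of the 3-polytope `Q₃'`. -/
def Q3'v : Set (Fin 3 → ℤ) :=
  {![1,0,0], ![-1,0,0], ![0,1,0], ![0,-1,0], ![1,1,0], ![-1,-1,0], ![0,0,1], ![1,0,-1]}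

/-- Embed `ℤ²` into coordinates `o, o+1` of `ℝ^d`. -/
def embed2 (d o : ℕ) (v : Fin 2 → ℤ) : Fin d → ℝ :=
  fun i => if (i : ℕ) = o then (v 0 : ℝ) else if (i : ℕ) = o + 1 then (v 1 : ℝ) else 0

/-- Embed `ℤ³` into coordinates `0, 1, 2` of `ℝ^d`. -/
def embed3 (d : ℕ) (v : Fin 3 → ℤ) : Fin d → ℝ :=
  fun i => if (i : ℕ) = 0 then (v 0 : ℝ) else if (i : ℕ) = 1 then (v 1 : ℝ)
    else if (i : ℕ) = 2 then (v 2 : ℝ) else 0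

/-- Standard model of a polytope in `ℝ^d` that splits into a polygon with vertex set `Q`
(in coordinates `0,1`) and `(d-2)/2` copies of `V₂` (in the remaining coordinate pairs). -/
def splitModel2 (d : ℕ) (Q : Set (Fin 2 → ℤ)) : Set (Fin d → ℝ) :=
  convexHull ℝ (embed2 d 0 '' Q ∪ ⋃ j ∈ Finset.range ((d - 2) / 2), embed2 d (2 * j + 2) '' V2v)

/-- Standard model of a polytope in `ℝ^d` that splits into a 3-polytope with vertex set `Q`
(in coordinates `0,1,2`) and `(d-3)/2` copies of `V₂` (in the remaining coordinate pairs). -/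
def splitModel3 (d : ℕ) (Q : Set (Fin 3 → ℤ)) : Set (Fin d → ℝ) :=
  convexHull ℝ (embed3 d '' Q ∪ ⋃ j ∈ Finset.range ((d - 3) / 2), embed2 d (2 * j + 3) '' V2v)

/-- Standard model of a polytope in `ℝ^d` that splits into `d/2` copies of `V₂`. -/
def splitModelV2 (d : ℕ) : Set (Fin d → ℝ) :=
  convexHull ℝ (⋃ j ∈ Finset.range (d / 2), embed2 d (2 * j) '' V2v)

/-- `φ` is a unimodular transformation: a linear automorphism of `ℝ^d` mapping the lattice
`ℤ^d` onto itself. `P` splits into given polytopes iff some unimodular transformation maps `P`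
onto the corresponding standard model. -/
def Unimodular {d : ℕ} (φ : (Fin d → ℝ) ≃ₗ[ℝ] (Fin d → ℝ)) : Prop :=
  ∀ x, IsLP x ↔ IsLP (φ x)

/-!
Let `s` be the sum of the vertices of `P` and let `u` be a vertex of `P*`, that is, the normal of a
facet of `P`. The heights `⟨u, x⟩` of the vertices `x` of `P` are integers `≤ 1`. Exactly `d` of
them are `1`, because the facet is a simplex, and at most `d` are `0`: a vertex at height `0` has a
negative coordinate in the basis formed by the vertices of the facet, and then it is the only new
vertex of the neighbouring facet across the corresponding ridge. As there are `3 d` vertices,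
`⟨u, s⟩ ≤ 0` for all `u`. Since `0` is interior to `P*`, this forces `s = 0`, and all the estimates
are equalities: for every `u` there are `d` vertices at each of the heights `1`, `0` and `-1`.

Hence `P* = -P*`, and `P = -P`. Fix a facet, with vertices `b i`. The neighbouring facets show that
the `b i` form a lattice basis and that the vertices at height `0` have coordinates in
`{-1, 0, 1}`, with a single `-1` and, by symmetry, a single `1`. So they are the vectors
`b (σ i) - b i` for some fixed-point-free map `σ`, which is an involution because `P = -P`. Each
orbit `{i, σ i}` contributes the six vertices of a copy of `V₂` with basis `b i`, `-b (σ i)`.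
-/

section

open Set Filter Topology
open Module (Basis finrank finrank_fin_fun finrank_eq_nat_card_basis)

section Polytope

variable {E : Type*} [AddCommGroup E] [Module ℝ E] {P : Set E}

/-- A convex polytope: the notion of `IsLatticePolytope` without the lattice, for the part of
the argument that belongs to convex geometry. -/
def IsPolytope (P : Set E) : Prop :=
  ∃ V : Set E, V.Finite ∧ P = convexHull ℝ V

lemma IsPolytope.finite_extremePoints (hP : IsPolytope P) : (P.extremePoints ℝ).Finite := by
  obtain ⟨V, hV, rfl⟩ := hP
  exact hV.subset extremePoints_convexHull_subset

lemma IsPolytope.convex (hP : IsPolytope P) : Convex ℝ P := by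
  obtain ⟨V, -, rfl⟩ := hP
  exact convex_convexHull ℝ V

variable [TopologicalSpace E] [IsTopologicalAddGroup E] [ContinuousSMul ℝ E]

lemma IsPolytope.isCompact (hP : IsPolytope P) : IsCompact P := by
  obtain ⟨V, hV, rfl⟩ := hP
  exact hV.isCompact_convexHull ℝ

variable [T2Space E] [LocallyConvexSpace ℝ E]

lemma IsPolytope.convexHull_extremePoints (hP : IsPolytope P) :
    convexHull ℝ (P.extremePoints ℝ) = P := by
  rw [← (hP.finite_extremePoints.isClosed_convexHull ℝ).closure_eq]
  exact closure_convexHull_extremePoints hP.isCompact hP.convex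

lemma IsPolytope.apply_le_of_extremePoints (hP : IsPolytope P) (f : Module.Dual ℝ E) {c : ℝ}
    (h : ∀ x ∈ P.extremePoints ℝ, f x ≤ c) : ∀ x ∈ P, f x ≤ c := by
  rw [← hP.convexHull_extremePoints]
  exact fun x hx ↦ convexHull_min h (convex_halfSpace_le f.isLinear c) hx

lemma IsPolytope.exists_extremePoints_apply_neg (hP : IsPolytope P) (h0 : P ∈ 𝓝 0)
    {f : Module.Dual ℝ E} (hf : f ≠ 0) : ∃ x ∈ P.extremePoints ℝ, f x < 0 := by
  by_contra! h
  obtain ⟨z, hz⟩ : ∃ z, 0 < f z := by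
    obtain ⟨z, hz⟩ := DFunLike.ne_iff.1 hf
    rcases hz.lt_or_gt with hneg | hpos
    · exact ⟨-z, by simpa using hneg⟩
    · exact ⟨z, hpos⟩
  have hscale : ∀ᶠ δ : ℝ in 𝓝 0, δ • (-z) ∈ P :=
    ((continuous_id.smul continuous_const).tendsto' 0 0 (zero_smul ℝ (-z))).eventually h0
  obtain ⟨δ, hδ, hδP⟩ := hscale.exists_gt
  have hle : (-f) (δ • (-z)) ≤ 0 :=
    hP.apply_le_of_extremePoints (-f) (fun x hx ↦ by simpa using h x hx) _ hδP
  have hpos : 0 < δ * f z := mul_pos hδ hz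
  simp only [LinearMap.neg_apply, map_smul, map_neg, smul_eq_mul, neg_neg] at hle
  exact hle.not_gt hpos

end Polytope

section Dotp

variable {d : ℕ}

lemma dotp_comm (x y : Fin d → ℝ) : dotp x y = dotp y x :=
  dotProduct_comm x y

lemma dotp_add (x y z : Fin d → ℝ) : dotp x (y + z) = dotp x y + dotp x z :=
  dotProduct_add x y z

lemma dotp_neg (x y : Fin d → ℝ) : dotp x (-y) = -dotp x y :=
  dotProduct_neg x y

lemma add_dotp (x y z : Fin d → ℝ) : dotp (x + y) z = dotp x z + dotp y z :=
  add_dotProduct x y z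

lemma neg_dotp (x y : Fin d → ℝ) : dotp (-x) y = -dotp x y :=
  neg_dotProduct x y

lemma sub_dotp (x y z : Fin d → ℝ) : dotp (x - y) z = dotp x z - dotp y z :=
  sub_dotProduct x y z

lemma smul_dotp (c : ℝ) (x y : Fin d → ℝ) : dotp (c • x) y = c * dotp x y :=
  smul_dotProduct c x y

lemma dotp_smul (c : ℝ) (x y : Fin d → ℝ) : dotp x (c • y) = c * dotp x y :=
  dotProduct_smul c x y

lemma dotp_sum {ι : Type*} (s : Finset ι) (x : Fin d → ℝ) (y : ι → Fin d → ℝ) :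
    dotp x (∑ i ∈ s, y i) = ∑ i ∈ s, dotp x (y i) :=
  dotProduct_sum x s y

lemma IsLP.dotp {x y : Fin d → ℝ} (hx : IsLP x) (hy : IsLP y) : ∃ n : ℤ, dotp x y = n := by
  choose m hm using hx
  choose n hn using hy
  exact ⟨∑ i, m i * n i, by simp [_root_.dotp, hm, hn]⟩

lemma IsLatticePolytope.isPolytope {P : Set (Fin d → ℝ)} (hP : IsLatticePolytope P) :
    IsPolytope P := by
  obtain ⟨V, -, rfl⟩ := hP
  exact ⟨V, V.finite_toSet, rfl⟩

lemma IsLatticePolytope.isLP_of_mem_extremePoints {P : Set (Fin d → ℝ)}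
    (hP : IsLatticePolytope P) {x : Fin d → ℝ} (hx : x ∈ P.extremePoints ℝ) : IsLP x := by
  obtain ⟨V, hV, rfl⟩ := hP
  exact hV x (extremePoints_convexHull_subset hx)

end Dotp

section Dual

variable {d : ℕ} {P : Set (Fin d → ℝ)} {u : Fin d → ℝ}

lemma mem_dualPolytope_of_extremePoints (hP : IsPolytope P)
    (h : ∀ x ∈ P.extremePoints ℝ, dotp u x ≤ 1) : u ∈ dualPolytope P :=
  hP.apply_le_of_extremePoints (dotProductEquiv ℝ (Fin d) u) h

lemma dualPolytope_mem_nhds_zero (hP : IsCompact P) : dualPolytope P ∈ 𝓝 0 := by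
  have hcont : Continuous fun p : (Fin d → ℝ) × (Fin d → ℝ) ↦ dotp p.1 p.2 := by
    unfold dotp
    fun_prop
  refine hP.eventually_forall_of_forall_eventually (P := fun u y ↦ dotp u y ≤ 1) fun y _ ↦ ?_
  refine (hcont.tendsto (0, y)).eventually_le_const ?_
  simp [dotp]

lemma mem_of_forall_mem_dualPolytope (hconv : Convex ℝ P) (hclosed : IsClosed P) (h0 : 0 ∈ P)
    {x : Fin d → ℝ} (hx : ∀ u ∈ dualPolytope P, dotp u x ≤ 1) : x ∈ P := by
  by_contra hxP
  obtain ⟨f, c, hfP, hfx⟩ := geometric_hahn_banach_closed_point hconv hclosed hxP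
  obtain ⟨w, hw⟩ := (dotProductEquiv ℝ (Fin d)).surjective f
  replace hw : ∀ y, f y = dotp w y := fun y ↦ (LinearMap.congr_fun hw y).symm
  have hc : 0 < c := by simpa using hfP 0 h0
  have hmem : c⁻¹ • w ∈ dualPolytope P := fun y hy ↦ by
    rw [smul_dotp, ← hw, inv_mul_le_iff₀ hc, mul_one]
    exact (hfP y hy).le
  have hle := hx _ hmem
  rw [smul_dotp, ← hw, inv_mul_le_iff₀ hc, mul_one] at hle
  exact hle.not_gt hfx

/-- The vertices of `P` at height `c` above the hyperplane orthogonal to `u`. Facets are always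
given by their normals, the vertices `u` of the dual polytope; the vertices of the facet itself
are then `levelVertices P u 1`. -/
def levelVertices (P : Set (Fin d → ℝ)) (u : Fin d → ℝ) (c : ℝ) : Set (Fin d → ℝ) :=
  {x ∈ P.extremePoints ℝ | dotp u x = c}

lemma eventually_add_smul_mem_dualPolytope (hP : IsPolytope P) (hu : u ∈ dualPolytope P)
    {w : Fin d → ℝ} (hw : ∀ x ∈ levelVertices P u 1, dotp w x = 0) :
    ∀ᶠ ε : ℝ in 𝓝 0, u + ε • w ∈ dualPolytope P := by
  have hvert : ∀ᶠ ε : ℝ in 𝓝 0, ∀ x ∈ P.extremePoints ℝ, dotp (u + ε • w) x ≤ 1 := by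
    refine hP.finite_extremePoints.eventually_all.2 fun x hx ↦ ?_
    simp only [add_dotp, smul_dotp]
    rcases (hu x hx.1).eq_or_lt with h1 | hlt
    · simp [hw x ⟨hx, h1⟩, h1]
    · have hcont : Continuous fun ε : ℝ ↦ dotp u x + ε * dotp w x := by fun_prop
      exact (hcont.tendsto' 0 (dotp u x) (by simp)).eventually_le_const hlt
  exact hvert.mono fun ε hε ↦ mem_dualPolytope_of_extremePoints hP hε

lemma span_levelVertices_of_mem_extremePoints (hP : IsPolytope P)
    (hu : u ∈ (dualPolytope P).extremePoints ℝ) :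
    Submodule.span ℝ (levelVertices P u 1) = ⊤ := by
  by_contra hspan
  obtain ⟨f, hf0, hf⟩ := Submodule.exists_le_ker_of_lt_top _ (lt_top_iff_ne_top.2 hspan)
  obtain ⟨w, rfl⟩ := (dotProductEquiv ℝ (Fin d)).surjective f
  have hw : w ≠ 0 := by
    rintro rfl
    exact hf0 (map_zero _)
  have hplus := eventually_add_smul_mem_dualPolytope hP hu.1
    fun x hx ↦ hf (Submodule.subset_span hx)
  have hminus := (continuous_neg.tendsto' (0 : ℝ) 0 neg_zero).eventually hplus
  obtain ⟨ε, hpos, hε, hε'⟩ := (hplus.and hminus).exists_gt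
  have heq : u + ε • w = u :=
    hu.2 hε hε' ⟨1 / 2, 1 / 2, by norm_num, by norm_num, by norm_num, by module⟩
  exact hw ((smul_eq_zero.1 (add_eq_left.1 heq)).resolve_left hpos.ne')

lemma eq_of_convex_combination_eq {a b s t c : ℝ} (ha : 0 < a) (hb : 0 < b) (hab : a + b = 1)
    (hs : s ≤ c) (ht : t ≤ c) (h : a * s + b * t = c) : s = c := by
  have hsum : a * (c - s) + b * (c - t) = 0 := by linear_combination c * hab - h
  have has : a * (c - s) = 0 :=
    ((add_eq_zero_iff_of_nonneg (mul_nonneg ha.le (sub_nonneg.2 hs))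
      (mul_nonneg hb.le (sub_nonneg.2 ht))).1 hsum).1
  exact (sub_eq_zero.1 ((mul_eq_zero.1 has).resolve_left ha.ne')).symm

lemma mem_extremePoints_dualPolytope (hu : u ∈ dualPolytope P)
    (hspan : Submodule.span ℝ (levelVertices P u 1) = ⊤) :
    u ∈ (dualPolytope P).extremePoints ℝ := by
  refine mem_extremePoints_iff_left.2 ⟨hu, ?_⟩
  rintro v hv w hw ⟨a, b, ha, hb, hab, rfl⟩
  refine (dotProductEquiv ℝ (Fin d)).injective (LinearMap.ext_on hspan fun x hx ↦ ?_)
  change dotp v x = dotp (a • v + b • w) x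
  have hx1 := hx.2
  rw [hx1]
  rw [add_dotp, smul_dotp, smul_dotp] at hx1
  exact eq_of_convex_combination_eq ha hb hab (hv x hx.1.1) (hw x hx.1.1) hx1

lemma extremePoints_face (hu : u ∈ dualPolytope P) :
    {y ∈ P | dotp u y = 1}.extremePoints ℝ = levelVertices P u 1 := by
  have hface : IsExtreme ℝ P {y ∈ P | dotp u y = 1} := by
    refine ⟨sep_subset _ _, ?_⟩
    rintro x hx y hy z ⟨-, hz⟩ ⟨a, b, ha, hb, hab, rfl⟩
    rw [dotp_add, dotp_smul, dotp_smul] at hz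
    exact ⟨hx, eq_of_convex_combination_eq ha hb hab (hu x hx) (hu y hy) hz⟩
  rw [hface.extremePoints_eq]
  ext x
  exact ⟨fun ⟨⟨_, hx1⟩, hx⟩ ↦ ⟨hx, hx1⟩, fun ⟨hx, hx1⟩ ↦ ⟨⟨hx.1, hx1⟩, hx⟩⟩

end Dual

section Facet

variable {d : ℕ} [NeZero d] {P : Set (Fin d → ℝ)} {u : Fin d → ℝ}

lemma finrank_vectorSpan_face (hspan : Submodule.span ℝ (levelVertices P u 1) = ⊤) :
    finrank ℝ (vectorSpan ℝ {y ∈ P | dotp u y = 1}) = d - 1 := by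
  set F := {y ∈ P | dotp u y = 1}
  have hlower : d ≤ finrank ℝ (vectorSpan ℝ F) + 1 := by
    have htop : vectorSpan ℝ (insert 0 F) = ⊤ := by
      rw [vectorSpan_eq_span_vsub_set_right ℝ (mem_insert 0 F), ← top_le_iff, ← hspan]
      exact Submodule.span_mono fun x hx ↦ ⟨x, .inr ⟨hx.1.1, hx.2⟩, sub_zero x⟩
    have hle := finrank_vectorSpan_insert_le_set ℝ F 0
    rwa [htop, finrank_top, finrank_fin_fun] at hle
  have hupper : finrank ℝ (vectorSpan ℝ F) < d := by
    have hu0 : dotProductEquiv ℝ (Fin d) u ≠ 0 := by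
      intro hu0
      have hempty : levelVertices P u 1 = ∅ := eq_empty_of_forall_notMem fun x hx ↦
        zero_ne_one ((LinearMap.congr_fun hu0 x).symm.trans hx.2)
      rw [hempty, Submodule.span_empty] at hspan
      exact bot_ne_top hspan
    have hker : vectorSpan ℝ F ≤ LinearMap.ker (dotProductEquiv ℝ (Fin d) u) := by
      rw [vectorSpan_def, Submodule.span_le]
      rintro _ ⟨x, hx, y, hy, rfl⟩
      exact (dotProduct_sub u x y).trans (sub_eq_zero.2 (hx.2.trans hy.2.symm))
    have hle := Submodule.finrank_mono hker
    have hsum := Module.Dual.finrank_ker_add_one_of_ne_zero hu0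
    rw [finrank_fin_fun] at hsum
    lia
  lia

lemma IsSimplicial.ncard_levelVertices_one (hs : IsSimplicial P) (hP : IsPolytope P)
    (hu : u ∈ (dualPolytope P).extremePoints ℝ) : (levelVertices P u 1).ncard = d := by
  have hspan := span_levelVertices_of_mem_extremePoints hP hu
  have hne : (levelVertices P u 1).Nonempty := by
    rw [nonempty_iff_ne_empty]
    intro hempty
    rw [hempty, Submodule.span_empty] at hspan
    exact bot_ne_top hspan
  rw [← extremePoints_face hu.1]
  exact hs _ ⟨u, hne.mono fun x hx ↦ ⟨hx.1.1, hx.2⟩, hu.1, rfl, finrank_vectorSpan_face hspan⟩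

lemma IsSimplicial.exists_basis_range_eq (hs : IsSimplicial P) (hP : IsPolytope P)
    (hu : u ∈ (dualPolytope P).extremePoints ℝ) :
    ∃ b : Basis (Fin d) ℝ (Fin d → ℝ), range b = levelVertices P u 1 := by
  have hcard : Nat.card (levelVertices P u 1) = d := by
    rw [Nat.card_coe_set_eq, hs.ncard_levelVertices_one hP hu]
  have : Finite (levelVertices P u 1) := Nat.finite_of_card_ne_zero (hcard.trans_ne (NeZero.ne d))
  let v : Fin d → Fin d → ℝ := Subtype.val ∘ (Finite.equivFinOfCardEq hcard).symm
  have hv : range v = levelVertices P u 1 := by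
    rw [EquivLike.range_comp, Subtype.range_coe]
  have hspan : ⊤ ≤ Submodule.span ℝ (range v) := by
    rw [hv, span_levelVertices_of_mem_extremePoints hP hu]
  have hli : LinearIndependent ℝ v :=
    linearIndependent_of_top_le_span_of_card_eq_finrank hspan (by simp)
  exact ⟨Basis.mk hli hspan, by rw [Basis.coe_mk, hv]⟩

end Facet

section Neighbor

variable {d : ℕ} {P : Set (Fin d → ℝ)} {u : Fin d → ℝ} {ι : Type*} {b : Basis ι ℝ (Fin d → ℝ)}

lemma dotp_eq_sum_repr [Fintype ι] (hb : ∀ i, dotp u (b i) = 1) (x : Fin d → ℝ) :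
    dotp u x = ∑ i, b.repr x i := by
  calc dotp u x = dotp u (∑ i, b.repr x i • b i) := by rw [b.sum_repr]
    _ = ∑ i, b.repr x i := by simp only [dotp_sum, dotp_smul, hb, mul_one]

lemma exists_repr_neg_of_dotp_eq_zero [Finite ι] (hb : ∀ i, dotp u (b i) = 1) {x : Fin d → ℝ}
    (hx : x ≠ 0) (hux : dotp u x = 0) : ∃ i, b.repr x i < 0 := by
  have := Fintype.ofFinite ι
  by_contra! hnonneg
  rw [dotp_eq_sum_repr hb, Finset.sum_eq_zero_iff_of_nonneg fun i _ ↦ hnonneg i] at hux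
  exact hx (b.repr.map_eq_zero_iff.1 (Finsupp.ext fun i ↦ hux i (Finset.mem_univ i)))

/-- The vector that represents the `i`-th coordinate functional of `b` with respect to `dotp`.
If `b` consists of the vertices of a simplicial facet with normal `u`, the facet on the other
side of the ridge opposite to `b i` has normal `u - t • coordVec b i` for some `t > 0`. -/
def coordVec (b : Basis ι ℝ (Fin d → ℝ)) (i : ι) : Fin d → ℝ :=
  (dotProductEquiv ℝ (Fin d)).symm (b.coord i)

lemma coordVec_dotp (i : ι) (x : Fin d → ℝ) : dotp (coordVec b i) x = b.repr x i :=
  LinearMap.congr_fun ((dotProductEquiv ℝ (Fin d)).apply_symm_apply (b.coord i)) x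

lemma sub_smul_coordVec_dotp (t : ℝ) (i : ι) (x : Fin d → ℝ) :
    dotp (u - t • coordVec b i) x = dotp u x - t * b.repr x i := by
  rw [sub_dotp, smul_dotp, coordVec_dotp]

lemma exists_pos_forall_sub_mul_le {α : Type*} {s : Set α} (hs : s.Finite) {f g : α → ℝ} {c : ℝ}
    (hf : ∀ x ∈ s, f x ≤ c) (hlt : ∀ x ∈ s, g x < 0 → f x < c) (hne : ∃ x ∈ s, g x < 0) :
    ∃ t > 0, (∀ x ∈ s, f x - t * g x ≤ c) ∧ ∃ x ∈ s, g x < 0 ∧ f x - t * g x = c := by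
  obtain ⟨x, ⟨hxs, hgx⟩, hmin⟩ := {x ∈ s | g x < 0}.exists_min_image
    (fun x ↦ (c - f x) / -g x) (hs.subset (sep_subset _ _)) hne
  have ht : 0 < (c - f x) / -g x := div_pos (sub_pos.2 (hlt x hxs hgx)) (neg_pos.2 hgx)
  refine ⟨(c - f x) / -g x, ht, fun y hy ↦ ?_, x, hxs, hgx, by field_simp [hgx.ne]; ring⟩
  rcases lt_or_ge (g y) 0 with hgy | hgy
  · have hratio := hmin y ⟨hy, hgy⟩
    rw [le_div_iff₀ (neg_pos.2 hgy)] at hratio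
    linarith
  · linarith [hf y hy, mul_nonneg ht.le hgy]

lemma span_eq_top_of_forall_ne_mem [Finite ι] {R M : Type*} [Field R] [AddCommGroup M] [Module R M]
    (b : Basis ι R M) {s : Set M} {i : ι} (hb : ∀ k, k ≠ i → b k ∈ s) {x : M} (hx : x ∈ s)
    (hxi : b.repr x i ≠ 0) : Submodule.span R s = ⊤ := by
  have := Fintype.ofFinite ι
  classical
  have hbs : ∀ k, k ≠ i → b k ∈ Submodule.span R s := fun k hk ↦ Submodule.subset_span (hb k hk)
  have hsmul : b.repr x i • b i ∈ Submodule.span R s := by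
    rw [← add_sub_cancel_right (b.repr x i • b i) (∑ k ∈ Finset.univ.erase i, b.repr x k • b k),
      Finset.add_sum_erase _ (fun k ↦ b.repr x k • b k) (Finset.mem_univ i), b.sum_repr]
    exact sub_mem (Submodule.subset_span hx) (Submodule.sum_mem _ fun k hk ↦
      Submodule.smul_mem _ _ (hbs k (Finset.ne_of_mem_erase hk)))
  rw [← top_le_iff, ← b.span_eq, Submodule.span_le]
  rintro _ ⟨k, rfl⟩
  rcases eq_or_ne k i with rfl | hk
  · exact (Submodule.smul_mem_iff _ hxi).1 hsmul
  · exact hbs k hk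

lemma basis_mem_levelVertices_sub_smul_coordVec (hb : range b = levelVertices P u 1) (t : ℝ)
    {i k : ι} (hk : k ≠ i) : b k ∈ levelVertices P (u - t • coordVec b i) 1 := by
  have hbk : b k ∈ levelVertices P u 1 := hb ▸ mem_range_self k
  exact ⟨hbk.1, by simp [sub_smul_coordVec_dotp, hbk.2, hk]⟩

lemma exists_sub_smul_coordVec_mem_extremePoints [Finite ι] (hP : IsPolytope P) (h0 : P ∈ 𝓝 0)
    (hu : u ∈ dualPolytope P) (hb : range b = levelVertices P u 1) (i : ι) :
    ∃ t > (0 : ℝ), u - t • coordVec b i ∈ (dualPolytope P).extremePoints ℝ := by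
  have hlt : ∀ x ∈ P.extremePoints ℝ, b.repr x i < 0 → dotp u x < 1 := by
    classical
    intro x hx hxi
    refine (hu x hx.1).lt_of_ne fun hux ↦ hxi.not_ge ?_
    obtain ⟨k, rfl⟩ := hb.ge ⟨hx, hux⟩
    rw [b.repr_self, Finsupp.single_apply]
    split_ifs <;> norm_num
  have hcoord : b.coord i ≠ 0 := fun h ↦ by simpa using LinearMap.congr_fun h (b i)
  obtain ⟨t, ht, hle, x, hx, hxi, hux⟩ := exists_pos_forall_sub_mul_le hP.finite_extremePoints
    (fun x hx ↦ hu x hx.1) hlt (hP.exists_extremePoints_apply_neg h0 hcoord)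
  refine ⟨t, ht, mem_extremePoints_dualPolytope ?_ ?_⟩
  · refine mem_dualPolytope_of_extremePoints hP fun y hy ↦ ?_
    rw [sub_smul_coordVec_dotp]
    exact hle y hy
  · exact span_eq_top_of_forall_ne_mem b
      (fun k hk ↦ basis_mem_levelVertices_sub_smul_coordVec hb t hk)
      ⟨hx, by rw [sub_smul_coordVec_dotp]; exact hux⟩ hxi.ne

lemma IsSimplicial.eq_of_notMem_range [NeZero d] [Finite ι] (hs : IsSimplicial P)
    (hP : IsPolytope P) (hb : range b = levelVertices P u 1) {t : ℝ} {i : ι}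
    (hu' : u - t • coordVec b i ∈ (dualPolytope P).extremePoints ℝ) {x y : Fin d → ℝ}
    (hx : x ∈ levelVertices P (u - t • coordVec b i) 1) (hxb : x ∉ range b)
    (hy : y ∈ levelVertices P (u - t • coordVec b i) 1) (hyb : y ∉ range b) : x = y := by
  have hridge : b '' {i}ᶜ ⊆ levelVertices P (u - t • coordVec b i) 1 := by
    rintro _ ⟨k, hk, rfl⟩
    exact basis_mem_levelVertices_sub_smul_coordVec hb t hk
  have hridge_card : (b '' {i}ᶜ).ncard = d - 1 := by
    rw [ncard_image_of_injective _ b.injective, ncard_compl, ncard_singleton,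
      ← finrank_eq_nat_card_basis b, finrank_fin_fun]
  have hcard : (levelVertices P (u - t • coordVec b i) 1 \ b '' {i}ᶜ).ncard ≤ 1 := by
    rw [ncard_sdiff hridge, hs.ncard_levelVertices_one hP hu', hridge_card]
    lia
  have hfin : (levelVertices P (u - t • coordVec b i) 1).Finite :=
    hP.finite_extremePoints.subset (sep_subset _ _)
  exact (ncard_le_one_iff hfin.sdiff).1 hcard
    ⟨hx, fun h ↦ hxb (image_subset_range _ _ h)⟩ ⟨hy, fun h ↦ hyb (image_subset_range _ _ h)⟩

end Neighbor

section Reflexive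

variable {d : ℕ} {P : Set (Fin d → ℝ)} {u : Fin d → ℝ}

lemma IsReflexive.isPolytope (hP : IsReflexive P) : IsPolytope P :=
  hP.1.isPolytope

lemma IsReflexive.mem_nhds_zero (hP : IsReflexive P) : P ∈ 𝓝 0 :=
  mem_interior_iff_mem_nhds.1 hP.2.1

lemma IsReflexive.ncard_extremePoints_pos (hP : IsReflexive P) :
    0 < (P.extremePoints ℝ).ncard :=
  (ncard_pos hP.isPolytope.finite_extremePoints).2 <|
    hP.isPolytope.isCompact.extremePoints_nonempty ⟨0, mem_of_mem_nhds hP.mem_nhds_zero⟩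

lemma IsReflexive.extremePoints_dualPolytope_nonempty (hP : IsReflexive P) :
    ((dualPolytope P).extremePoints ℝ).Nonempty :=
  hP.2.2.isPolytope.isCompact.extremePoints_nonempty
    ⟨0, mem_of_mem_nhds (dualPolytope_mem_nhds_zero hP.isPolytope.isCompact)⟩

lemma IsReflexive.exists_int_dotp_eq (hP : IsReflexive P)
    (hu : u ∈ (dualPolytope P).extremePoints ℝ) {x : Fin d → ℝ} (hx : IsLP x) :
    ∃ n : ℤ, dotp u x = n :=
  (hP.2.2.isLP_of_mem_extremePoints hu).dotp hx

lemma IsReflexive.mem_levelVertices_one_of_pos (hP : IsReflexive P)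
    (hu : u ∈ (dualPolytope P).extremePoints ℝ) {x : Fin d → ℝ} (hx : x ∈ P.extremePoints ℝ)
    (hpos : 0 < dotp u x) : x ∈ levelVertices P u 1 := by
  obtain ⟨n, hn⟩ := hP.exists_int_dotp_eq hu (hP.1.isLP_of_mem_extremePoints hx)
  have hle := hu.1 x hx.1
  rw [hn] at hpos hle
  norm_cast at hpos hle
  refine ⟨hx, ?_⟩
  rw [hn, le_antisymm hle hpos, Int.cast_one]

lemma IsReflexive.eq_zero_of_forall_dotp_nonpos (hP : IsReflexive P) {x : Fin d → ℝ}
    (hx : ∀ u ∈ (dualPolytope P).extremePoints ℝ, dotp u x ≤ 0) : x = 0 := by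
  by_contra hne
  have hf : dotProductEquiv ℝ (Fin d) (-x) ≠ 0 := by simpa using hne
  obtain ⟨u, hu, hneg⟩ := hP.2.2.isPolytope.exists_extremePoints_apply_neg
    (dualPolytope_mem_nhds_zero hP.isPolytope.isCompact) hf
  have hpos : 0 < dotp u x := by
    change dotp (-x) u < 0 at hneg
    rwa [neg_dotp, neg_lt_zero, dotp_comm] at hneg
  exact (hx u hu).not_gt hpos

variable {ι : Type*} {b : Basis ι ℝ (Fin d → ℝ)}

lemma notMem_range_of_mem_levelVertices (hb : range b = levelVertices P u 1) {c : ℝ} (hc : c ≠ 1)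
    {x : Fin d → ℝ} (hx : x ∈ levelVertices P u c) : x ∉ range b := by
  rw [hb]
  exact fun hx1 ↦ hc (hx.2.symm.trans hx1.2)

lemma IsReflexive.mem_levelVertices_sub_smul_coordVec (hP : IsReflexive P) {t : ℝ} (ht : 0 < t)
    {i : ι} (hu' : u - t • coordVec b i ∈ (dualPolytope P).extremePoints ℝ) {x : Fin d → ℝ}
    (hx : x ∈ levelVertices P u 0) (hxi : b.repr x i < 0) :
    x ∈ levelVertices P (u - t • coordVec b i) 1 := by
  refine hP.mem_levelVertices_one_of_pos hu' hx.1 ?_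
  rw [sub_smul_coordVec_dotp, hx.2, zero_sub, neg_pos]
  exact mul_neg_of_pos_of_neg ht hxi

variable [Finite ι]

lemma IsReflexive.eq_of_repr_neg [NeZero d] (hP : IsReflexive P) (hs : IsSimplicial P)
    (hu : u ∈ dualPolytope P) (hb : range b = levelVertices P u 1) {i : ι} {x y : Fin d → ℝ}
    (hx : x ∈ levelVertices P u 0) (hxi : b.repr x i < 0)
    (hy : y ∈ levelVertices P u 0) (hyi : b.repr y i < 0) : x = y := by
  obtain ⟨t, ht, hu'⟩ :=
    exists_sub_smul_coordVec_mem_extremePoints hP.isPolytope hP.mem_nhds_zero hu hb i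
  exact hs.eq_of_notMem_range hP.isPolytope hb hu'
    (hP.mem_levelVertices_sub_smul_coordVec ht hu' hx hxi)
    (notMem_range_of_mem_levelVertices hb zero_ne_one hx)
    (hP.mem_levelVertices_sub_smul_coordVec ht hu' hy hyi)
    (notMem_range_of_mem_levelVertices hb zero_ne_one hy)

lemma IsReflexive.exists_repr_neg [NeZero d] (hP : IsReflexive P)
    (hb : range b = levelVertices P u 1) {x : Fin d → ℝ} (hx : x ∈ levelVertices P u 0) :
    ∃ i, b.repr x i < 0 := by
  refine exists_repr_neg_of_dotp_eq_zero (u := u) (fun i ↦ (hb.le (mem_range_self i)).2) ?_ hx.2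
  rintro rfl
  exact (disjoint_interior_extremePoints P).le_bot ⟨hP.2.1, hx.1⟩

lemma IsReflexive.ncard_levelVertices_zero_le [NeZero d] (hP : IsReflexive P) (hs : IsSimplicial P)
    (hu : u ∈ (dualPolytope P).extremePoints ℝ) : (levelVertices P u 0).ncard ≤ d := by
  obtain ⟨b, hb⟩ := hs.exists_basis_range_eq hP.isPolytope hu
  choose c hc using fun x : levelVertices P u 0 ↦ hP.exists_repr_neg hb x.2
  have hinj : Function.Injective c := fun x y hxy ↦ Subtype.ext <|
    hP.eq_of_repr_neg hs hu.1 hb x.2 (hc x) y.2 (hxy ▸ hc y)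
  simpa [Nat.card_coe_set_eq] using Nat.card_le_card_of_injective c hinj

end Reflexive

section VertexSum

lemma max_zero_neg_one_sub_eq {r : ℝ} (hint : ∃ n : ℤ, r = n) (hr : r ≤ 1) :
    max 0 (-1 - r) = 2 * (if r = 1 then 1 else 0) + (if r = 0 then 1 else 0) - 1 - r := by
  obtain ⟨n, rfl⟩ := hint
  norm_cast at hr ⊢
  split_ifs <;> lia

variable {d : ℕ} [NeZero d] {P : Set (Fin d → ℝ)} {u : Fin d → ℝ}

lemma IsReflexive.sum_max_zero_eq (hP : IsReflexive P) (hs : IsSimplicial P)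
    (hcard : (P.extremePoints ℝ).ncard = 3 * d) (hu : u ∈ (dualPolytope P).extremePoints ℝ)
    {V : Finset (Fin d → ℝ)} (hV : V = P.extremePoints ℝ) :
    ∑ x ∈ V, max 0 (-1 - dotp u x) = (levelVertices P u 0).ncard - d - dotp u (∑ x ∈ V, x) := by
  have hV' : ∀ x, x ∈ V ↔ x ∈ P.extremePoints ℝ := fun x ↦ by rw [← hV, Finset.mem_coe]
  have hlevel : ∀ c : ℝ, (V.filter fun x ↦ dotp u x = c).card = (levelVertices P u c).ncard := by
    intro c
    rw [← ncard_coe_finset, Finset.coe_filter]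
    simp only [hV', levelVertices]
  have hVcard : V.card = 3 * d := by rw [← hcard, ← hV, ncard_coe_finset]
  calc ∑ x ∈ V, max 0 (-1 - dotp u x)
      = ∑ x ∈ V, (2 * (if dotp u x = 1 then 1 else 0) + (if dotp u x = 0 then 1 else 0) - 1
          - dotp u x) := by
        refine Finset.sum_congr rfl fun x hx ↦ ?_
        have hx := (hV' x).1 hx
        exact max_zero_neg_one_sub_eq
          (hP.exists_int_dotp_eq hu (hP.1.isLP_of_mem_extremePoints hx)) (hu.1 x hx.1)
    _ = 2 * (levelVertices P u 1).ncard + (levelVertices P u 0).ncard - (3 * d : ℕ)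
          - dotp u (∑ x ∈ V, x) := by
        simp only [Finset.sum_sub_distrib, Finset.sum_add_distrib, ← Finset.mul_sum,
          Finset.sum_boole, hlevel, Finset.sum_const, hVcard, nsmul_eq_mul, mul_one, dotp_sum]
    _ = (levelVertices P u 0).ncard - d - dotp u (∑ x ∈ V, x) := by
        rw [hs.ncard_levelVertices_one hP.isPolytope hu]
        push_cast
        ring

lemma IsReflexive.sum_vertices_eq_zero (hP : IsReflexive P) (hs : IsSimplicial P)
    (hcard : (P.extremePoints ℝ).ncard = 3 * d) {V : Finset (Fin d → ℝ)}
    (hV : V = P.extremePoints ℝ) : ∑ x ∈ V, x = 0 := by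
  refine hP.eq_zero_of_forall_dotp_nonpos fun u hu ↦ ?_
  have hsum := hP.sum_max_zero_eq hs hcard hu hV
  have hnonneg : 0 ≤ ∑ x ∈ V, max 0 (-1 - dotp u x) :=
    Finset.sum_nonneg fun x _ ↦ le_max_left _ _
  have hle : ((levelVertices P u 0).ncard : ℝ) ≤ d :=
    mod_cast hP.ncard_levelVertices_zero_le hs hu
  linarith

lemma IsReflexive.sum_max_zero_eq_sub (hP : IsReflexive P) (hs : IsSimplicial P)
    (hcard : (P.extremePoints ℝ).ncard = 3 * d) (hu : u ∈ (dualPolytope P).extremePoints ℝ)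
    {V : Finset (Fin d → ℝ)} (hV : V = P.extremePoints ℝ) :
    ∑ x ∈ V, max 0 (-1 - dotp u x) = (levelVertices P u 0).ncard - d := by
  rw [hP.sum_max_zero_eq hs hcard hu hV, hP.sum_vertices_eq_zero hs hcard hV]
  simp [dotp]

lemma IsReflexive.le_ncard_levelVertices_zero (hP : IsReflexive P) (hs : IsSimplicial P)
    (hcard : (P.extremePoints ℝ).ncard = 3 * d) (hu : u ∈ (dualPolytope P).extremePoints ℝ) :
    d ≤ (levelVertices P u 0).ncard := by
  have hsum := hP.sum_max_zero_eq_sub hs hcard hu hP.isPolytope.finite_extremePoints.coe_toFinset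
  have hnonneg := hsum.symm.trans_ge (Finset.sum_nonneg fun x _ ↦ le_max_left _ _)
  exact_mod_cast sub_nonneg.1 hnonneg

lemma IsReflexive.neg_one_le_dotp (hP : IsReflexive P) (hs : IsSimplicial P)
    (hcard : (P.extremePoints ℝ).ncard = 3 * d) (hu : u ∈ (dualPolytope P).extremePoints ℝ)
    {x : Fin d → ℝ} (hx : x ∈ P.extremePoints ℝ) : -1 ≤ dotp u x := by
  have hfin := hP.isPolytope.finite_extremePoints
  have hsum := hP.sum_max_zero_eq_sub hs hcard hu hfin.coe_toFinset
  have hle : ((levelVertices P u 0).ncard : ℝ) ≤ d :=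
    mod_cast hP.ncard_levelVertices_zero_le hs hu
  have hmax : max 0 (-1 - dotp u x) ≤ 0 :=
    (Finset.single_le_sum (f := fun x ↦ max 0 (-1 - dotp u x)) (fun y _ ↦ le_max_left _ _)
      (hfin.mem_toFinset.2 hx)).trans (by rw [hsum]; linarith)
  linarith [(le_max_right _ _).trans hmax]

end VertexSum

section Symmetry

lemma neg_mem_extremePoints {𝕜 E : Type*} [Field 𝕜] [LinearOrder 𝕜] [IsStrictOrderedRing 𝕜]
    [AddCommGroup E] [Module 𝕜 E] {s : Set E} (hneg : ∀ x ∈ s, -x ∈ s) {x : E}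
    (hx : x ∈ s.extremePoints 𝕜) : -x ∈ s.extremePoints 𝕜 := by
  have hs : LinearEquiv.neg 𝕜 '' s = s := by
    refine (image_subset_iff.2 hneg).antisymm fun y hy ↦ ⟨-y, hneg y hy, neg_neg y⟩
  have himage := image_extremePoints (LinearEquiv.neg 𝕜 (M := E)) s
  rw [hs] at himage
  exact himage ▸ mem_image_of_mem _ hx

variable {d : ℕ} {P : Set (Fin d → ℝ)} {u : Fin d → ℝ}

lemma IsReflexive.neg_mem (hP : IsReflexive P)
    (hheight : ∀ u ∈ (dualPolytope P).extremePoints ℝ, ∀ x ∈ P.extremePoints ℝ, -1 ≤ dotp u x)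
    {x : Fin d → ℝ} (hx : x ∈ P) : -x ∈ P := by
  have hneg : ∀ u ∈ (dualPolytope P).extremePoints ℝ, -u ∈ dualPolytope P := fun u hu ↦
    mem_dualPolytope_of_extremePoints hP.isPolytope fun y hy ↦ by
      rw [neg_dotp]
      linarith [hheight u hu y hy]
  refine mem_of_forall_mem_dualPolytope hP.isPolytope.convex hP.isPolytope.isCompact.isClosed
    (mem_of_mem_nhds hP.mem_nhds_zero) fun u hu ↦ ?_
  rw [dotp_comm]
  refine hP.2.2.isPolytope.apply_le_of_extremePoints (dotProductEquiv ℝ (Fin d) (-x))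
    (fun v hv ↦ ?_) u hu
  calc dotp (-x) v = dotp (-v) x := by rw [neg_dotp, neg_dotp, dotp_comm]
    _ ≤ 1 := hneg v hv x hx

lemma IsReflexive.neg_mem_levelVertices [NeZero d] (hP : IsReflexive P) (hs : IsSimplicial P)
    (hcard : (P.extremePoints ℝ).ncard = 3 * d) {c : ℝ} {x : Fin d → ℝ}
    (hx : x ∈ levelVertices P u c) : -x ∈ levelVertices P u (-c) := by
  refine ⟨neg_mem_extremePoints (fun y hy ↦ hP.neg_mem ?_ hy) hx.1, by rw [dotp_neg, hx.2]⟩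
  exact fun v hv z hz ↦ hP.neg_one_le_dotp hs hcard hv hz

end Symmetry

section Hexagons

lemma exists_equiv_apply_eq_iff {α ι : Type*} [Finite ι] {R : α → ι → Prop}
    (hex : ∀ a, ∃ i, R a i) (huniq : ∀ a a' i, R a i → R a' i → a = a')
    (hcard : Nat.card ι ≤ Nat.card α) : ∃ e : α ≃ ι, ∀ a i, e a = i ↔ R a i := by
  choose f hf using hex
  have hinj : Function.Injective f := fun a a' h ↦ huniq a a' (f a') (h ▸ hf a) (hf a')
  have := Finite.of_injective f hinj
  let e := Equiv.ofBijective f (hinj.bijective_of_nat_card_le hcard)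
  refine ⟨e, fun a i ↦ ⟨by rintro rfl; exact hf a, fun h ↦ ?_⟩⟩
  obtain ⟨a', rfl⟩ := e.surjective i
  exact congrArg e (huniq a a' _ h (hf a'))

lemma eq_neg_one_or_eq_zero_or_eq_one {r : ℝ} (hint : ∃ n : ℤ, r = n) (hlower : -1 ≤ r)
    (hupper : r ≤ 1) : r = -1 ∨ r = 0 ∨ r = 1 := by
  obtain ⟨n, rfl⟩ := hint
  norm_cast at hlower hupper ⊢
  lia

variable {d : ℕ} [NeZero d] {P : Set (Fin d → ℝ)} {u : Fin d → ℝ}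

lemma IsReflexive.dotp_eq_neg_one_or_eq_zero_or_eq_one (hP : IsReflexive P) (hs : IsSimplicial P)
    (hcard : (P.extremePoints ℝ).ncard = 3 * d) (hu : u ∈ (dualPolytope P).extremePoints ℝ)
    {x : Fin d → ℝ} (hx : x ∈ P.extremePoints ℝ) : dotp u x = -1 ∨ dotp u x = 0 ∨ dotp u x = 1 :=
  eq_neg_one_or_eq_zero_or_eq_one (hP.exists_int_dotp_eq hu (hP.1.isLP_of_mem_extremePoints hx))
    (hP.neg_one_le_dotp hs hcard hu hx) (hu.1 x hx.1)

variable {ι : Type*} [Finite ι] {b : Basis ι ℝ (Fin d → ℝ)}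

lemma IsReflexive.exists_equiv_levelVertices_zero (hP : IsReflexive P) (hs : IsSimplicial P)
    (hcard : (P.extremePoints ℝ).ncard = 3 * d) (hu : u ∈ (dualPolytope P).extremePoints ℝ)
    (hb : range b = levelVertices P u 1) :
    ∃ e : levelVertices P u 0 ≃ ι, ∀ z i, e z = i ↔ b.repr z i < 0 := by
  refine exists_equiv_apply_eq_iff (fun z ↦ hP.exists_repr_neg hb z.2)
    (fun z w i hz hw ↦ Subtype.ext (hP.eq_of_repr_neg hs hu.1 hb z.2 hz w.2 hw)) ?_
  rw [← finrank_eq_nat_card_basis b, finrank_fin_fun, Nat.card_coe_set_eq]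
  exact hP.le_ncard_levelVertices_zero hs hcard hu

lemma IsReflexive.sub_coordVec_mem_extremePoints (hP : IsReflexive P) (hs : IsSimplicial P)
    (hcard : (P.extremePoints ℝ).ncard = 3 * d) (hu : u ∈ (dualPolytope P).extremePoints ℝ)
    (hb : range b = levelVertices P u 1) (i : ι) :
    u - coordVec b i ∈ (dualPolytope P).extremePoints ℝ := by
  obtain ⟨t, ht, hu'⟩ :=
    exists_sub_smul_coordVec_mem_extremePoints hP.isPolytope hP.mem_nhds_zero hu.1 hb i
  obtain ⟨e, he⟩ := hP.exists_equiv_levelVertices_zero hs hcard hu hb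
  have hbi : b i ∈ levelVertices P u 1 := hb.le (mem_range_self i)
  have hheight : dotp (u - t • coordVec b i) (b i) = 1 - t := by
    simp [sub_smul_coordVec_dotp, hbi.2]
  suffices t = 1 by simpa [this] using hu'
  rcases hP.dotp_eq_neg_one_or_eq_zero_or_eq_one hs hcard hu' hbi.1 with h | h | h
  · -- If `t = 2`, then `-b i` and a vertex at height `0` are both new on the neighbouring facet.
    have hneg : -b i ∈ levelVertices P u (-1) := hP.neg_mem_levelVertices hs hcard hbi
    have hneg' : -b i ∈ levelVertices P (u - t • coordVec b i) 1 := by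
      simpa using hP.neg_mem_levelVertices hs hcard ⟨hbi.1, h⟩
    have hz := (e.symm i).2
    have hz' := hP.mem_levelVertices_sub_smul_coordVec ht hu' hz
      ((he _ _).1 (e.apply_symm_apply i))
    have heq := hs.eq_of_notMem_range hP.isPolytope hb hu'
      hneg' (notMem_range_of_mem_levelVertices hb (by norm_num) hneg)
      hz' (notMem_range_of_mem_levelVertices hb zero_ne_one hz)
    have hheights : (-1 : ℝ) = 0 := hneg.2.symm.trans ((congrArg (dotp u) heq).trans hz.2)
    norm_num at hheights
  · linarith
  · linarith

lemma IsReflexive.repr_eq_neg_one_or_eq_zero_or_eq_one (hP : IsReflexive P) (hs : IsSimplicial P)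
    (hcard : (P.extremePoints ℝ).ncard = 3 * d) (hu : u ∈ (dualPolytope P).extremePoints ℝ)
    (hb : range b = levelVertices P u 1) {x : Fin d → ℝ} (hx : x ∈ levelVertices P u 0) (i : ι) :
    b.repr x i = -1 ∨ b.repr x i = 0 ∨ b.repr x i = 1 := by
  have hheight : dotp (u - coordVec b i) x = -b.repr x i := by
    rw [sub_dotp, coordVec_dotp, hx.2, zero_sub]
  have hu' := hP.sub_coordVec_mem_extremePoints hs hcard hu hb i
  have htri := hP.dotp_eq_neg_one_or_eq_zero_or_eq_one hs hcard hu' hx.1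
  rw [hheight] at htri
  grind

lemma IsReflexive.exists_involutive_levelVertices_zero (hP : IsReflexive P) (hs : IsSimplicial P)
    (hcard : (P.extremePoints ℝ).ncard = 3 * d) (hu : u ∈ (dualPolytope P).extremePoints ℝ)
    (hb : range b = levelVertices P u 1) :
    ∃ σ : ι → ι, Function.Involutive σ ∧ (∀ i, σ i ≠ i) ∧
      levelVertices P u 0 = range fun i ↦ b (σ i) - b i := by
  classical
  obtain ⟨e, he⟩ := hP.exists_equiv_levelVertices_zero hs hcard hu hb
  let negZ (z : levelVertices P u 0) : levelVertices P u 0 :=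
    ⟨-z, by simpa using hP.neg_mem_levelVertices hs hcard z.2⟩
  let σ (i : ι) : ι := e (negZ (e.symm i))
  have hneg : ∀ i k, i = k ↔ b.repr (e.symm i) k < 0 := fun i k ↦ by
    rw [← he, e.apply_symm_apply]
  have hpos : ∀ i k, σ i = k ↔ 0 < b.repr (e.symm i) k := fun i k ↦ by
    simp only [σ, negZ, he, map_neg, Finsupp.neg_apply, neg_lt_zero]
  have hσ : ∀ i, (e.symm i : Fin d → ℝ) = b (σ i) - b i := by
    intro i
    refine b.ext_elem fun k ↦ ?_
    rw [map_sub, b.repr_self, b.repr_self, Finsupp.sub_apply, Finsupp.single_apply,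
      Finsupp.single_apply]
    simp only [hneg i, hpos i]
    rcases hP.repr_eq_neg_one_or_eq_zero_or_eq_one hs hcard hu hb (e.symm i).2 k with h | h | h <;>
      norm_num [h]
  refine ⟨σ, fun i ↦ ?_, fun i hi ↦ ?_, ?_⟩
  · simp only [σ, negZ, e.symm_apply_apply, neg_neg, Subtype.coe_eta, e.apply_symm_apply]
  · exact ((hpos i i).1 hi).asymm ((hneg i i).1 rfl)
  · simp only [← hσ]
    exact ((EquivLike.range_comp Subtype.val e.symm).trans Subtype.range_coe).symm

lemma IsReflexive.exists_involutive_extremePoints_eq (hP : IsReflexive P) (hs : IsSimplicial P)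
    (hcard : (P.extremePoints ℝ).ncard = 3 * d) (hu : u ∈ (dualPolytope P).extremePoints ℝ)
    (hb : range b = levelVertices P u 1) :
    ∃ σ : ι → ι, Function.Involutive σ ∧ (∀ i, σ i ≠ i) ∧
      P.extremePoints ℝ = ⋃ i, {b i, -b i, b (σ i) - b i} := by
  obtain ⟨σ, hσ, hne, hzero⟩ := hP.exists_involutive_levelVertices_zero hs hcard hu hb
  refine ⟨σ, hσ, hne, Subset.antisymm (fun x hx ↦ mem_iUnion.2 ?_) (iUnion_subset fun i ↦ ?_)⟩
  · rcases hP.dotp_eq_neg_one_or_eq_zero_or_eq_one hs hcard hu hx with h | h | h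
    · have hneg := hP.neg_mem_levelVertices hs hcard ⟨hx, h⟩
      rw [neg_neg] at hneg
      obtain ⟨i, hi⟩ := hb.ge hneg
      exact ⟨i, by simp [hi]⟩
    · obtain ⟨i, rfl⟩ := hzero.le ⟨hx, h⟩
      exact ⟨i, by simp⟩
    · obtain ⟨i, rfl⟩ := hb.ge ⟨hx, h⟩
      exact ⟨i, by simp⟩
  · have hbi : b i ∈ levelVertices P u 1 := hb.le (mem_range_self i)
    rintro x (rfl | rfl | rfl)
    · exact hbi.1
    · exact (hP.neg_mem_levelVertices hs hcard hbi).1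
    · exact (hzero.ge (mem_range_self i)).1

end Hexagons

section LatticeBasis

variable {d : ℕ} {ι κ : Type*} {b : Basis ι ℝ (Fin d → ℝ)}

/-- A basis of `ℝ^d` that is also a `ℤ`-basis of the lattice `ℤ^d`: the lattice points are the
points with integral coordinates. -/
def IsLatticeBasis (b : Basis ι ℝ (Fin d → ℝ)) : Prop :=
  ∀ x, IsLP x ↔ ∀ i, ∃ n : ℤ, b.repr x i = n

lemma isLatticeBasis_of_isLP [Finite ι] (hb : ∀ i, IsLP (b i))
    (hrepr : ∀ x, IsLP x → ∀ i, ∃ n : ℤ, b.repr x i = n) : IsLatticeBasis b := by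
  have := Fintype.ofFinite ι
  refine fun x ↦ ⟨hrepr x, fun hx k ↦ ?_⟩
  choose n hn using hx
  choose m hm using fun i ↦ hb i k
  refine ⟨∑ i, n i * m i, ?_⟩
  rw [← b.sum_repr x]
  simp [hn, hm]

lemma IsLatticeBasis.reindex (hb : IsLatticeBasis b) (e : ι ≃ κ) :
    IsLatticeBasis (b.reindex e) := fun x ↦ by
  simp only [hb x, Basis.repr_reindex_apply, e.symm.forall_congr_left, Equiv.symm_symm,
    e.symm_apply_apply]

lemma IsLatticeBasis.unitsSMul (hb : IsLatticeBasis b) (s : ι → ℤˣ) :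
    IsLatticeBasis (b.unitsSMul fun i ↦ Units.map (Int.castRingHom ℝ) (s i)) := by
  intro x
  rw [hb x]
  refine forall_congr' fun i ↦ ?_
  rw [Basis.repr_unitsSMul]
  rcases Int.units_eq_one_or (s i) with h | h
  · simp [h]
  · simp only [h, Units.smul_def]
    exact ⟨fun ⟨n, hn⟩ ↦ ⟨-n, by simp [hn]⟩, fun ⟨n, hn⟩ ↦ ⟨-n, by simp [← hn]⟩⟩

lemma IsLatticeBasis.unimodular_equivFun {b : Basis (Fin d) ℝ (Fin d → ℝ)}
    (hb : IsLatticeBasis b) : Unimodular b.equivFun :=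
  hb

end LatticeBasis

section Splitting

lemma exists_equiv_of_involutive {α : Type*} [Finite α] {σ : α → α} (hσ : Function.Involutive σ)
    (hne : ∀ a, σ a ≠ a) :
    ∃ (n : ℕ) (e : Fin n × Fin 2 ≃ α), ∀ j, σ (e (j, 0)) = e (j, 1) := by
  let := IsWellOrder.linearOrder (WellOrderingRel (α := α))
  obtain ⟨n, ⟨f⟩⟩ := Finite.exists_equiv_fin {a // a < σ a}
  let g (p : Fin n × Fin 2) : α := ![(f.symm p.1 : α), σ (f.symm p.1)] p.2
  have hinj : Function.Injective g := by
    have hlt : ∀ j, (f.symm j : α) < σ (f.symm j) := fun j ↦ (f.symm j).2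
    have hcross : ∀ j j', (f.symm j : α) ≠ σ (f.symm j') := fun j j' h ↦ by
      have := hlt j
      rw [h, hσ] at this
      exact this.asymm (hlt j')
    rintro ⟨j, k⟩ ⟨j', k'⟩ h
    fin_cases k <;> fin_cases k'
    · simpa [g, Subtype.ext_iff.symm] using h
    · exact (hcross _ _ h).elim
    · exact (hcross _ _ h.symm).elim
    · simpa [g, hσ.injective.eq_iff, Subtype.ext_iff.symm] using h
  have hsurj : Function.Surjective g := by
    intro a
    rcases (hne a).lt_or_gt with ha | ha
    · exact ⟨(f ⟨σ a, by rwa [hσ]⟩, 1), by simp [g, hσ a]⟩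
    · exact ⟨(f ⟨a, ha⟩, 0), by simp [g]⟩
  exact ⟨n, Equiv.ofBijective g ⟨hinj, hsurj⟩, fun j ↦ rfl⟩

/-- The vertices of the copy of `V₂` spanned by `x` and `y`. -/
def hexagon {M : Type*} [AddCommGroup M] (x y : M) : Set M :=
  (fun v : Fin 2 → ℤ ↦ v 0 • x + v 1 • y) '' V2v

lemma hexagon_neg_right {M : Type*} [AddCommGroup M] (x y : M) :
    hexagon x (-y) = {x, -x, y - x} ∪ {y, -y, x - y} := by
  have hlist : hexagon x (-y) = {x, -y, x - y, -x, y, y - x} := by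
    simp [hexagon, V2v, image_insert_eq, sub_eq_add_neg, add_comm y]
  rw [hlist]
  ext z
  simp only [mem_union, mem_insert_iff, mem_singleton_iff]
  tauto

variable {d : ℕ} [NeZero d] {P : Set (Fin d → ℝ)} {u : Fin d → ℝ}

lemma IsReflexive.isLatticeBasis (hP : IsReflexive P) (hs : IsSimplicial P)
    (hcard : (P.extremePoints ℝ).ncard = 3 * d) (hu : u ∈ (dualPolytope P).extremePoints ℝ)
    {ι : Type*} [Finite ι] {b : Basis ι ℝ (Fin d → ℝ)} (hb : range b = levelVertices P u 1) :
    IsLatticeBasis b := by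
  refine isLatticeBasis_of_isLP
    (fun i ↦ hP.1.isLP_of_mem_extremePoints (hb.le (mem_range_self i)).1) fun x hx i ↦ ?_
  have hu' := hP.sub_coordVec_mem_extremePoints hs hcard hu hb i
  obtain ⟨m, hm⟩ := hP.exists_int_dotp_eq hu hx
  obtain ⟨n, hn⟩ := hP.exists_int_dotp_eq hu' hx
  refine ⟨m - n, ?_⟩
  rw [sub_dotp, coordVec_dotp, hm] at hn
  push_cast
  linarith

lemma IsReflexive.exists_isLatticeBasis_extremePoints_eq (hP : IsReflexive P)
    (hs : IsSimplicial P) (hcard : (P.extremePoints ℝ).ncard = 3 * d) :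
    ∃ (n : ℕ) (b : Basis (Fin n × Fin 2) ℝ (Fin d → ℝ)), IsLatticeBasis b ∧
      P.extremePoints ℝ = ⋃ j, hexagon (b (j, 0)) (b (j, 1)) := by
  obtain ⟨u, hu⟩ := hP.extremePoints_dualPolytope_nonempty
  obtain ⟨b, hb⟩ := hs.exists_basis_range_eq hP.isPolytope hu
  obtain ⟨σ, hσ, hne, hvert⟩ := hP.exists_involutive_extremePoints_eq hs hcard hu hb
  obtain ⟨n, e, he⟩ := exists_equiv_of_involutive hσ hne
  refine ⟨n, _, ((hP.isLatticeBasis hs hcard hu hb).reindex e.symm).unitsSMul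
    fun p ↦ ![1, -1] p.2, ?_⟩
  have he' : ∀ j, σ (e (j, 1)) = e (j, 0) := fun j ↦ by rw [← he, hσ]
  rw [hvert, ← e.surjective.iUnion_comp, iUnion_prod']
  refine iUnion_congr fun j ↦ ?_
  have hunion : ∀ s : Fin 2 → Set (Fin d → ℝ), ⋃ k, s k = s 0 ∪ s 1 := fun s ↦ by
    ext x
    simp only [mem_iUnion, Fin.exists_fin_two, mem_union]
  rw [hunion, he, he', ← hexagon_neg_right]
  simp [Basis.unitsSMul_apply]

end Splitting

section Model

lemma embed2_mul_two {n : ℕ} (j : Fin n) (v : Fin 2 → ℤ) :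
    embed2 (n * 2) (2 * j) v = v 0 • Pi.single (finProdFinEquiv (j, 0)) (1 : ℝ) +
      v 1 • Pi.single (finProdFinEquiv (j, 1)) (1 : ℝ) := by
  ext i
  simp only [embed2, Pi.single_apply, Fin.ext_iff, finProdFinEquiv_apply_val, Pi.add_apply,
    Pi.smul_apply]
  split_ifs <;> grind

lemma splitModelV2_mul_two (n : ℕ) : splitModelV2 (n * 2) = convexHull ℝ (⋃ j : Fin n,
    hexagon (Pi.single (finProdFinEquiv (j, 0)) 1) (Pi.single (finProdFinEquiv (j, 1)) 1)) := by
  simp only [hexagon, ← embed2_mul_two]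
  rw [splitModelV2, Nat.mul_div_cancel _ two_pos]
  congr 1
  ext x
  simp [Fin.exists_iff]

lemma image_hexagon {M N : Type*} [AddCommGroup M] [AddCommGroup N] {F : Type*} [FunLike F M N]
    [AddMonoidHomClass F M N] (f : F) (x y : M) :
    f '' hexagon x y = hexagon (f x) (f y) := by
  simp only [hexagon, image_image, map_add, map_zsmul]

lemma IsLatticeBasis.exists_unimodular_image_eq {n : ℕ}
    {b : Basis (Fin n × Fin 2) ℝ (Fin (n * 2) → ℝ)} (hb : IsLatticeBasis b)
    {P : Set (Fin (n * 2) → ℝ)} (hP : IsPolytope P)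
    (hvert : P.extremePoints ℝ = ⋃ j, hexagon (b (j, 0)) (b (j, 1))) :
    ∃ φ : (Fin (n * 2) → ℝ) ≃ₗ[ℝ] (Fin (n * 2) → ℝ),
      Unimodular φ ∧ φ '' P = splitModelV2 (n * 2) := by
  refine ⟨_, (hb.reindex finProdFinEquiv).unimodular_equivFun, ?_⟩
  have hφ : ∀ p, (b.reindex finProdFinEquiv).equivFun (b p) = Pi.single (finProdFinEquiv p) 1 := by
    intro p
    simp [Basis.equivFun_apply, Finsupp.single_eq_pi_single]
  conv_lhs => rw [← hP.convexHull_extremePoints, ← LinearEquiv.coe_coe, LinearMap.image_convexHull]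
  simp only [hvert, image_iUnion, LinearEquiv.coe_coe, image_hexagon, hφ, splitModelV2_mul_two]

end Model

end

theorem stmt3_general {d : ℕ} (P : Set (Fin d → ℝ)) (hP : IsReflexive P) (hs : IsSimplicial P)
    (hcard : (P.extremePoints ℝ).ncard = 3 * d) :
    Even d ∧ ∃ φ : (Fin d → ℝ) ≃ₗ[ℝ] (Fin d → ℝ), Unimodular φ ∧ φ '' P = splitModelV2 d := by
  have : NeZero d := ⟨by have := hP.ncard_extremePoints_pos; lia⟩
  obtain ⟨n, b, hb, hvert⟩ := hP.exists_isLatticeBasis_extremePoints_eq hs hcard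
  obtain rfl : d = n * 2 := by simpa using Module.finrank_eq_nat_card_basis b
  exact ⟨even_two.mul_left n, hb.exists_unimodular_image_eq hP.isPolytope hvert⟩

/-- a `d`-dimensional simplicial reflexive polytope with `3d` vertices, `d` even,
splits into `d/2` copies of `V₂`. -/
theorem stmt3 {d : ℕ} (hde : Even d)
    (P : Set (Fin d → ℝ)) (hP : IsReflexive P) (hs : IsSimplicial P)
    (hcard : (Set.extremePoints ℝ P).ncard = 3 * d) :
    ∃ φ : (Fin d → ℝ) ≃ₗ[ℝ] (Fin d → ℝ), Unimodular φ ∧ φ '' P = splitModelV2 d :=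
  (stmt3_general P hP hs hcard).2
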